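/- Let R be a commutative ring and n ≥ 3 odd. The map d : G_{n-1}(R) → R^× defined by d(g) := l(g·g*) is a group homomorphism (i.e. l(gh·(gh)*) = l(g·g*)·l(h·h*) for all g, h ∈ G_{n-1}(R)), and its kernel equals SG_{n-1}(R); in particular SG_{n-1}(R) = {g ∈ G_{n-1}(R) : l(g·g*) = 1}. -/

import Mathlib

open Matrix

noncomputable section

/-- Reindexing equivalence `Fin (2 ^ n) ⊕ Fin (2 ^ n) ≃ Fin (2 ^ (n + 1))`. -/
def pow2Equiv (n : ℕ) : Fin (2 ^ n) ⊕ Fin (2 ^ n) ≃ Fin (2 ^ (n + 1)) :=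
  finSumFinEquiv.trans (finCongr (by rw [pow_succ]; ring))

/-- The Suslin matrix `S_n(v, w)` of size `2 ^ n` associated to `v, w : Fin (n+1) → R`. -/
def sus (R : Type) [CommRing R] : (n : ℕ) → (Fin (n + 1) → R) → (Fin (n + 1) → R) →
    Matrix (Fin (2 ^ n)) (Fin (2 ^ n)) R
  | 0, v, _ => v 0 • 1
  | n + 1, v, w =>
      Matrix.reindex (pow2Equiv n) (pow2Equiv n)
        (Matrix.fromBlocks (v 0 • 1) (sus R n (v ∘ Fin.succ) (w ∘ Fin.succ))
          (-(sus R n (w ∘ Fin.succ) (v ∘ Fin.succ))ᵀ) (w 0 • 1))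

/-- The conjugate Suslin matrix `S̄_n(v, w) = S_n(w, v)ᵀ`. -/
def susBar (R : Type) [CommRing R] (n : ℕ) (v w : Fin (n + 1) → R) :
    Matrix (Fin (2 ^ n)) (Fin (2 ^ n)) R :=
  (sus R n w v)ᵀ

/-- Suslin's matrices `J_n`. -/
def Jmat (R : Type) [CommRing R] : (n : ℕ) → Matrix (Fin (2 ^ n)) (Fin (2 ^ n)) R
  | 0 => 1
  | n + 1 =>
      if Even (n + 1) then
        Matrix.reindex (pow2Equiv n) (pow2Equiv n)
          (Matrix.fromBlocks (Jmat R n) 0 0 (-(Jmat R n)))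
      else
        Matrix.reindex (pow2Equiv n) (pow2Equiv n)
          (Matrix.fromBlocks 0 (Jmat R n) (-(Jmat R n)) 0)

/-- The involution `M ↦ M* = J_n · Mᵀ · J_nᵀ`. -/
def invol (R : Type) [CommRing R] (n : ℕ) (M : Matrix (Fin (2 ^ n)) (Fin (2 ^ n)) R) :
    Matrix (Fin (2 ^ n)) (Fin (2 ^ n)) R :=
  Jmat R n * Mᵀ * (Jmat R n)ᵀ

/-- `φ(v, w) = [[0, S_n(v,w)], [S̄_n(v,w), 0]]` (note the shift: vectors in `R^{n+1}`,
matrices of size `2 ^ (n + 1)`). -/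
def phiMat (R : Type) [CommRing R] (n : ℕ) (v w : Fin (n + 1) → R) :
    Matrix (Fin (2 ^ (n + 1))) (Fin (2 ^ (n + 1))) R :=
  Matrix.reindex (pow2Equiv n) (pow2Equiv n)
    (Matrix.fromBlocks 0 (sus R n v w) (susBar R n v w) 0)

/-- The set of Suslin matrices of size `2 ^ m`. -/
def SuslinSet (R : Type) [CommRing R] (m : ℕ) : Set (Matrix (Fin (2 ^ m)) (Fin (2 ^ m)) R) :=
  {S | ∃ v w : Fin (m + 1) → R, S = sus R m v w}

/-- The image of the hyperbolic space `R^{m+1} ⊕ R^{m+1}` inside the Clifford algebra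
`M_{2^{m+1}}(R)`. -/
def PhiSet (R : Type) [CommRing R] (m : ℕ) :
    Set (Matrix (Fin (2 ^ (m + 1))) (Fin (2 ^ (m + 1))) R) :=
  {x | ∃ v w : Fin (m + 1) → R, x = phiMat R m v w}

/-- The block diagonal matrix `diag(g₁, g₂)`. -/
def diagBlock (R : Type) [CommRing R] (m : ℕ)
    (g₁ g₂ : Matrix (Fin (2 ^ m)) (Fin (2 ^ m)) R) :
    Matrix (Fin (2 ^ (m + 1))) (Fin (2 ^ (m + 1))) R :=
  Matrix.reindex (pow2Equiv m) (pow2Equiv m) (Matrix.fromBlocks g₁ 0 0 g₂)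

/-- `Spin_{2(m+1)}(R)`, as the set of pairs `(g₁, g₂)` such that `x = diag(g₁, g₂)`
satisfies `x · x* = 1` and conjugation by `x` maps the image of the hyperbolic space
onto itself. -/
def SpinPair (R : Type) [CommRing R] (m : ℕ) :
    Set (Matrix (Fin (2 ^ m)) (Fin (2 ^ m)) R × Matrix (Fin (2 ^ m)) (Fin (2 ^ m)) R) :=
  {p | IsUnit p.1 ∧ IsUnit p.2 ∧
    diagBlock R m p.1 p.2 * invol R (m + 1) (diagBlock R m p.1 p.2) = 1 ∧
    (fun y => diagBlock R m p.1 p.2 * y * (diagBlock R m p.1 p.2)⁻¹) '' PhiSet R m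
      = PhiSet R m}

/-- The group `G_m(R)` of `g ∈ GL_{2^m}(R)` such that `g · S · g*` is a Suslin matrix
for every Suslin matrix `S`. -/
def GSet (R : Type) [CommRing R] (m : ℕ) : Set (Matrix (Fin (2 ^ m)) (Fin (2 ^ m)) R) :=
  {g | IsUnit g ∧ ∀ S ∈ SuslinSet R m, g * S * invol R m g ∈ SuslinSet R m}

/-- The group `SG_m(R)` of `g ∈ G_m(R)` preserving the length `l(S(v,w)) = v ⬝ᵥ w`. -/
def SGSet (R : Type) [CommRing R] (m : ℕ) : Set (Matrix (Fin (2 ^ m)) (Fin (2 ^ m)) R) :=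
  {g | g ∈ GSet R m ∧ ∀ v w v' w' : Fin (m + 1) → R,
    g * sus R m v w * invol R m g = sus R m v' w' → v' ⬝ᵥ w' = v ⬝ᵥ w}

/-- The hyperbolic quadratic form `q(v, w) = v ⬝ᵥ w` on `R^n ⊕ R^n`. -/
def hypForm (R : Type) [CommRing R] (n : ℕ) :
    QuadraticForm R ((Fin n → R) × (Fin n → R)) :=
  LinearMap.BilinMap.toQuadraticMap
    (LinearMap.mk₂ R (fun x y => x.1 ⬝ᵥ y.2)
      (fun x x' y => by simp [add_dotProduct])
      (fun c x y => by simp [smul_dotProduct])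
      (fun x y y' => by simp [dotProduct_add])
      (fun x c y => by simp [dotProduct_smul]))

/-- `E_i = S_m(e_i, 0)`. -/
def Emat (R : Type) [CommRing R] (m : ℕ) (i : Fin (m + 1)) :
    Matrix (Fin (2 ^ m)) (Fin (2 ^ m)) R :=
  sus R m (Pi.single i 1) 0

/-- `F_i = S_m(0, e_i)`. -/
def Fmat (R : Type) [CommRing R] (m : ℕ) (i : Fin (m + 1)) :
    Matrix (Fin (2 ^ m)) (Fin (2 ^ m)) R :=
  sus R m 0 (Pi.single i 1)

/-!
Write `T = S(v, w)`, `T̄` for its conjugate and `q = v ⬝ᵥ w`. Then `T T̄ = q`, and `T + T̄` is the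
scalar `t = v₀ + w₀`, so that `T² = t T - q`. Suppose `g h = A` and `g T h = T'` are Suslin
matrices. Polarizing `T' T̄' = q(T')` between `T'` and `A` shows that `h T̄' g` is a scalar minus
`q(A) T`, so `q(T') = T (h T̄' g)` is, modulo multiples of `T`, equal to `q(A) q(T)`. Precisely,
`(q(T') - q(A) q(T)) • 1 = μ(T) • T` for a functional `μ`, additive in `T`. An off-diagonal entry
gives `μ(T) v₁ = 0`, and replacing `T` by its translate by `S(e₁, 0)` gives `μ(T) = 0`.
-/

section SuslinMatrices

variable {R : Type} [CommRing R]

theorem sus_succ (n : ℕ) (v w : Fin (n + 2) → R) :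
    sus R (n + 1) v w = reindex (pow2Equiv n) (pow2Equiv n)
      (fromBlocks (v 0 • 1) (sus R n (v ∘ Fin.succ) (w ∘ Fin.succ))
        (-susBar R n (v ∘ Fin.succ) (w ∘ Fin.succ)) (w 0 • 1)) :=
  rfl

theorem susBar_succ (n : ℕ) (v w : Fin (n + 2) → R) :
    susBar R (n + 1) v w = reindex (pow2Equiv n) (pow2Equiv n)
      (fromBlocks (w 0 • 1) (-sus R n (v ∘ Fin.succ) (w ∘ Fin.succ))
        (susBar R n (v ∘ Fin.succ) (w ∘ Fin.succ)) (v 0 • 1)) := by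
  simp [susBar, sus_succ, transpose_submatrix, fromBlocks_transpose]

theorem reindex_fromBlocks_smul_one (n : ℕ) (c : R) :
    reindex (pow2Equiv n) (pow2Equiv n) (fromBlocks (c • 1) 0 0 (c • 1)) =
      c • (1 : Matrix (Fin (2 ^ (n + 1))) (Fin (2 ^ (n + 1))) R) := by
  rw [← smul_zero c, ← fromBlocks_smul, fromBlocks_one]
  simp [submatrix_smul]

theorem sus_add (n : ℕ) (v w v' w' : Fin (n + 1) → R) :
    sus R n (v + v') (w + w') = sus R n v w + sus R n v' w' := by
  induction n with
  | zero => simp [sus, add_smul]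
  | succ n ih =>
    have comp_succ (x y : Fin (n + 2) → R) :
        (x + y) ∘ Fin.succ = x ∘ Fin.succ + y ∘ Fin.succ := rfl
    simp only [sus, comp_succ, ih, Pi.add_apply, add_smul, transpose_add, neg_add,
      ← fromBlocks_add, reindex_apply, submatrix_add]

theorem susBar_add (n : ℕ) (v w v' w' : Fin (n + 1) → R) :
    susBar R n (v + v') (w + w') = susBar R n v w + susBar R n v' w' := by
  simp only [susBar, sus_add, transpose_add]

theorem sus_zero (n : ℕ) : sus R n 0 0 = 0 := by
  simpa using sus_add n (0 : Fin (n + 1) → R) 0 0 0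

theorem sus_single_zero (n : ℕ) :
    sus R (n + 1) (Pi.single 0 1) (Pi.single 0 1) = 1 := by
  have tail_eq_zero : (Pi.single 0 1 : Fin (n + 2) → R) ∘ Fin.succ = 0 := by
    ext i
    simp
  simp [sus, tail_eq_zero, sus_zero]

theorem sus_mul_susBar_and_susBar_mul_sus (n : ℕ) (v w : Fin (n + 1) → R) :
    sus R n v w * susBar R n v w = (v ⬝ᵥ w) • 1 ∧
      susBar R n v w * sus R n v w = (v ⬝ᵥ w) • 1 := by
  induction n with
  | zero => simp [susBar, sus, dotProduct, smul_smul, mul_comm]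
  | succ n ih =>
    obtain ⟨hmul, hmul'⟩ := ih (v ∘ Fin.succ) (w ∘ Fin.succ)
    have dotProduct_eq_head_add_tail :
        v ⬝ᵥ w = v 0 * w 0 + (v ∘ Fin.succ) ⬝ᵥ (w ∘ Fin.succ) := by
      simp [dotProduct, Fin.sum_univ_succ]
    rw [← reindex_fromBlocks_smul_one, dotProduct_eq_head_add_tail, sus_succ, susBar_succ]
    simp only [reindex_apply, submatrix_mul_equiv, fromBlocks_multiply]
    constructor <;> congr 2 <;>
      simp [hmul, hmul', smul_smul, add_smul, mul_comm, add_comm]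

theorem sus_mul_susBar (n : ℕ) (v w : Fin (n + 1) → R) :
    sus R n v w * susBar R n v w = (v ⬝ᵥ w) • 1 :=
  (sus_mul_susBar_and_susBar_mul_sus n v w).1

theorem sus_mul_susBar_add_sus_mul_susBar (n : ℕ) (v w v' w' : Fin (n + 1) → R) :
    sus R n v w * susBar R n v' w' + sus R n v' w' * susBar R n v w =
      (v ⬝ᵥ w' + v' ⬝ᵥ w) • 1 := by
  have h := sus_mul_susBar n (v + v') (w + w')
  simp only [sus_add, susBar_add, add_mul, mul_add, sus_mul_susBar, add_dotProduct,
    dotProduct_add, add_smul] at h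
  rw [add_smul, ← sub_eq_zero, ← sub_eq_zero.2 h]
  abel

theorem sus_add_susBar (n : ℕ) (v w : Fin (n + 2) → R) :
    sus R (n + 1) v w + susBar R (n + 1) v w = (v 0 + w 0) • 1 := by
  rw [← reindex_fromBlocks_smul_one, sus_succ, susBar_succ]
  simp only [← coe_reindexLinearEquiv R R, ← map_add, fromBlocks_add]
  congr 2 <;> simp [add_smul, add_comm]

theorem sus_mul_self (n : ℕ) (v w : Fin (n + 2) → R) :
    sus R (n + 1) v w * sus R (n + 1) v w =
      (v 0 + w 0) • sus R (n + 1) v w - (v ⬝ᵥ w) • 1 := by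
  rw [← sus_mul_susBar, eq_sub_iff_add_eq, ← mul_add, sus_add_susBar, mul_smul_comm, mul_one]

theorem pow2Equiv_inl_zero (n : ℕ) : pow2Equiv n (Sum.inl 0) = 0 := by
  ext
  simp [pow2Equiv]

theorem zero_ne_pow2Equiv_inr_zero (n : ℕ) : 0 ≠ pow2Equiv n (Sum.inr 0) := by
  simp [← pow2Equiv_inl_zero]

theorem sus_apply_zero_zero (n : ℕ) (v w : Fin (n + 1) → R) : sus R n v w 0 0 = v 0 := by
  cases n with
  | zero => simp [sus]
  | succ n => simp [← pow2Equiv_inl_zero, sus]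

theorem sus_apply_inr_inr (n : ℕ) (v w : Fin (n + 2) → R) :
    sus R (n + 1) v w (pow2Equiv n (Sum.inr 0)) (pow2Equiv n (Sum.inr 0)) = w 0 := by
  simp [sus]

theorem sus_apply_zero_inr (n : ℕ) (v w : Fin (n + 2) → R) :
    sus R (n + 1) v w 0 (pow2Equiv n (Sum.inr 0)) = v 1 := by
  simp [← pow2Equiv_inl_zero, sus, sus_apply_zero_zero]

/- If `Y` is the inverse of `S = S(v, w)` and `q = v ⬝ᵥ w`, then `S̄ = q Y`, so `S ≡ v₀ + w₀`
modulo `q`; comparing the diagonal entries `v₀` and `w₀` gives `S ≡ 0`, hence `1 ≡ 0`. -/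
theorem isUnit_dotProduct_of_isUnit_sus {n : ℕ} {v w : Fin (n + 2) → R}
    (h : IsUnit (sus R (n + 1) v w)) : IsUnit (v ⬝ᵥ w) := by
  obtain ⟨Y, hSY, hYS⟩ := isUnit_iff_exists.1 h
  have hbar : susBar R (n + 1) v w = (v ⬝ᵥ w) • Y := by
    rw [← one_mul (susBar R (n + 1) v w), ← hYS, mul_assoc, sus_mul_susBar, mul_smul_comm,
      mul_one]
  have hsum := sus_add_susBar n v w
  rw [hbar] at hsum
  have hv := congrFun₂ hsum 0 0
  have hw := congrFun₂ hsum (pow2Equiv n (Sum.inr 0)) (pow2Equiv n (Sum.inr 0))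
  simp only [Matrix.add_apply, Matrix.smul_apply, smul_eq_mul, one_apply_eq, mul_one,
    sus_apply_zero_zero, sus_apply_inr_inr] at hv hw
  have hdvd : sus R (n + 1) v w =
      (v ⬝ᵥ w) • ((Y 0 0 + Y (pow2Equiv n (Sum.inr 0)) (pow2Equiv n (Sum.inr 0))) • 1 - Y) := by
    rw [smul_sub, smul_smul, eq_sub_iff_add_eq, hsum]
    congr 1
    linear_combination -hv - hw
  rw [hdvd, smul_mul_assoc] at hSY
  exact IsUnit.of_mul_eq_one _ (by simpa using congrFun₂ hSY 0 0)

end SuslinMatrices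

section Similitude

variable {R : Type} [CommRing R] {n : ℕ}
  {g h : Matrix (Fin (2 ^ (n + 1))) (Fin (2 ^ (n + 1))) R} {a b v w v' w' : Fin (n + 2) → R}

theorem mul_mul_susBar_mul_eq_smul_one {M : Matrix (Fin (2 ^ (n + 1))) (Fin (2 ^ (n + 1))) R}
    (hg : IsUnit g) (hM : g * M * h = sus R (n + 1) v w) :
    M * (h * susBar R (n + 1) v w * g) = (v ⬝ᵥ w) • 1 := by
  apply hg.mul_left_cancel
  simp only [← mul_assoc, hM, sus_mul_susBar, smul_mul_assoc, one_mul, mul_smul_comm, mul_one]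

theorem mul_susBar_mul_of_mul_sus_mul_eq (hg : IsUnit g) (hab : g * h = sus R (n + 1) a b)
    (hvw : g * sus R (n + 1) v w * h = sus R (n + 1) v' w') :
    h * susBar R (n + 1) v' w' * g =
      (a ⬝ᵥ w' + v' ⬝ᵥ b) • 1 - (a ⬝ᵥ b) • sus R (n + 1) v w := by
  have hbar : h * susBar R (n + 1) a b * g = (a ⬝ᵥ b) • 1 := by
    simpa only [one_mul] using mul_mul_susBar_mul_eq_smul_one hg (M := 1) (by rwa [mul_one])
  have hpolar := sus_mul_susBar_add_sus_mul_susBar (n + 1) a b v' w'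
  apply hg.mul_left_cancel
  calc g * (h * susBar R (n + 1) v' w' * g)
      = sus R (n + 1) a b * susBar R (n + 1) v' w' * g := by simp only [← hab, mul_assoc]
    _ = (a ⬝ᵥ w' + v' ⬝ᵥ b) • g - sus R (n + 1) v' w' * susBar R (n + 1) a b * g := by
        rw [eq_sub_of_add_eq hpolar, sub_mul, smul_mul_assoc, one_mul]
    _ = (a ⬝ᵥ w' + v' ⬝ᵥ b) • g -
          g * sus R (n + 1) v w * (h * susBar R (n + 1) a b * g) := by
        simp only [← hvw, mul_assoc]
    _ = g * ((a ⬝ᵥ w' + v' ⬝ᵥ b) • 1 - (a ⬝ᵥ b) • sus R (n + 1) v w) := by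
        simp only [hbar, mul_sub, mul_smul_comm, mul_one]

theorem sub_dotProduct_smul_one_eq_smul_sus (hg : IsUnit g) (hab : g * h = sus R (n + 1) a b)
    (hvw : g * sus R (n + 1) v w * h = sus R (n + 1) v' w') :
    (v' ⬝ᵥ w' - (a ⬝ᵥ b) * (v ⬝ᵥ w)) • (1 : Matrix (Fin (2 ^ (n + 1))) (Fin (2 ^ (n + 1))) R) =
      (a ⬝ᵥ w' + v' ⬝ᵥ b - (a ⬝ᵥ b) * (v 0 + w 0)) • sus R (n + 1) v w := by
  have hnorm := mul_mul_susBar_mul_eq_smul_one hg hvw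
  rw [mul_susBar_mul_of_mul_sus_mul_eq hg hab hvw, mul_sub, mul_smul_comm, mul_smul_comm, mul_one,
    sus_mul_self] at hnorm
  rw [sub_smul, ← hnorm]
  module

theorem dotProduct_eq_of_mul_sus_mul_eq (hg : IsUnit g)
    (hS : ∀ S ∈ SuslinSet R (n + 1), g * S * h ∈ SuslinSet R (n + 1))
    (hab : g * h = sus R (n + 1) a b) (hvw : g * sus R (n + 1) v w * h = sus R (n + 1) v' w') :
    v' ⬝ᵥ w' = (a ⬝ᵥ b) * (v ⬝ᵥ w) := by
  have defect_mul {x y x' y' : Fin (n + 2) → R}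
      (hxy : g * sus R (n + 1) x y * h = sus R (n + 1) x' y') :
      (a ⬝ᵥ y' + x' ⬝ᵥ b - (a ⬝ᵥ b) * (x 0 + y 0)) * x 1 = 0 := by
    have hentry := congrFun₂ (sub_dotProduct_smul_one_eq_smul_sus hg hab hxy)
      0 (pow2Equiv n (Sum.inr 0))
    simpa [sus_apply_zero_inr, zero_ne_pow2Equiv_inr_zero] using hentry.symm
  obtain ⟨p, q, hpq⟩ := hS _ ⟨Pi.single 1 1, 0, rfl⟩
  have htranslate : g * sus R (n + 1) (v + Pi.single 1 1) (w + 0) * h =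
      sus R (n + 1) (v' + p) (w' + q) := by
    rw [sus_add, sus_add, mul_add, add_mul, hvw, hpq]
  have defect_eq_zero : a ⬝ᵥ w' + v' ⬝ᵥ b - (a ⬝ᵥ b) * (v 0 + w 0) = 0 := by
    have hv := defect_mul hvw
    have hp := defect_mul hpq
    have hsum := defect_mul htranslate
    simp only [dotProduct_add, add_dotProduct, Pi.add_apply, Pi.single_eq_same, Pi.zero_apply,
      Pi.single_eq_of_ne (zero_ne_one : (0 : Fin (n + 2)) ≠ 1)] at hp hsum
    linear_combination hsum - hv - (v 1 + 1) * hp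
  have hscalar := sub_dotProduct_smul_one_eq_smul_sus hg hab hvw
  rw [defect_eq_zero, zero_smul] at hscalar
  exact sub_eq_zero.1 (by simpa using congrFun₂ hscalar 0 0)

end Similitude

section Involution

variable {R : Type} [CommRing R]

theorem transpose_Jmat_mul_Jmat (n : ℕ) : (Jmat R n)ᵀ * Jmat R n = 1 := by
  induction n with
  | zero => simp [Jmat]
  | succ n ih =>
    simp only [Jmat]
    split_ifs <;> simp [fromBlocks_transpose, fromBlocks_multiply, transpose_submatrix, ih]

theorem invol_mul (n : ℕ) (g h : Matrix (Fin (2 ^ n)) (Fin (2 ^ n)) R) :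
    invol R n (g * h) = invol R n h * invol R n g := by
  calc invol R n (g * h)
      = Jmat R n * hᵀ * 1 * gᵀ * (Jmat R n)ᵀ := by simp [invol, mul_assoc]
    _ = Jmat R n * hᵀ * ((Jmat R n)ᵀ * Jmat R n) * gᵀ * (Jmat R n)ᵀ := by
        rw [transpose_Jmat_mul_Jmat]
    _ = invol R n h * invol R n g := by simp only [invol, mul_assoc]

theorem isUnit_invol {n : ℕ} {g : Matrix (Fin (2 ^ n)) (Fin (2 ^ n)) R} (hg : IsUnit g) :
    IsUnit (invol R n g) :=
  have hJ : IsUnit (Jmat R n)ᵀ := .of_mul_eq_one _ (transpose_Jmat_mul_Jmat n)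
  (((isUnit_transpose _).1 hJ).mul ((isUnit_transpose _).2 hg)).mul hJ

end Involution

theorem length_hom_kernel_general (R : Type) [CommRing R] (m : ℕ) (hm : 1 ≤ m) :
    (∀ g : Matrix (Fin (2 ^ m)) (Fin (2 ^ m)) R, IsUnit g → ∀ a b : Fin (m + 1) → R,
      g * invol R m g = sus R m a b → IsUnit (a ⬝ᵥ b)) ∧
    (∀ g ∈ GSet R m, ∀ (h : Matrix (Fin (2 ^ m)) (Fin (2 ^ m)) R) (a b c d p q : Fin (m + 1) → R),
      g * invol R m g = sus R m a b → h * invol R m h = sus R m c d →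
      (g * h) * invol R m (g * h) = sus R m p q →
      p ⬝ᵥ q = (a ⬝ᵥ b) * (c ⬝ᵥ d)) ∧
    (∀ g ∈ GSet R m, ∀ a b : Fin (m + 1) → R,
      g * invol R m g = sus R m a b → (a ⬝ᵥ b = 1 ↔ g ∈ SGSet R m)) := by
  obtain ⟨n, rfl⟩ := Nat.exists_eq_add_of_le' hm
  refine ⟨fun g hg a b hab => ?_, fun g hg h a b c d p q hab hcd hpq => ?_,
    fun g hg a b hab => ⟨fun hone => ⟨hg, fun v w v' w' hvw => ?_⟩, fun hSG => ?_⟩⟩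
  · exact isUnit_dotProduct_of_isUnit_sus (hab ▸ hg.mul (isUnit_invol hg))
  · refine dotProduct_eq_of_mul_sus_mul_eq hg.1 hg.2 hab ?_
    rw [← hpq, ← hcd, invol_mul]
    simp only [mul_assoc]
  · rw [dotProduct_eq_of_mul_sus_mul_eq hg.1 hg.2 hab hvw, hone, one_mul]
  · simpa using hSG.2 (Pi.single 0 1) (Pi.single 0 1) a b (by rw [sus_single_zero, mul_one, hab])

/-- for odd `n ≥ 3` (here `n = m + 1`), the map `d(g) = l(g·g*)` is a group
homomorphism `G_{n-1}(R) → R^×` whose kernel is `SG_{n-1}(R)`; i.e. `l(g·g*)` is a unit,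
`l(gh·(gh)*) = l(g·g*)·l(h·h*)`, and `l(g·g*) = 1 ↔ g ∈ SG_{n-1}(R)`. -/
theorem length_hom_kernel (R : Type) [CommRing R] (m : ℕ) (hm : 2 ≤ m)
    (hodd : Odd (m + 1)) :
    (∀ g ∈ GSet R m, ∀ a b : Fin (m + 1) → R,
      g * invol R m g = sus R m a b → IsUnit (a ⬝ᵥ b)) ∧
    (∀ g ∈ GSet R m, ∀ h ∈ GSet R m, ∀ a b c d p q : Fin (m + 1) → R,
      g * invol R m g = sus R m a b → h * invol R m h = sus R m c d →
      (g * h) * invol R m (g * h) = sus R m p q →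
      p ⬝ᵥ q = (a ⬝ᵥ b) * (c ⬝ᵥ d)) ∧
    (∀ g ∈ GSet R m, ∀ a b : Fin (m + 1) → R,
      g * invol R m g = sus R m a b → (a ⬝ᵥ b = 1 ↔ g ∈ SGSet R m)) := by
  obtain ⟨hunit, hmul, hker⟩ := length_hom_kernel_general R m (by omega)
  exact ⟨fun g hg => hunit g hg.1, fun g hg h _ => hmul g hg h, hker⟩
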